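/- Fix n ≥ 1 and digits i_1,…,i_{n−1} and i_n, and define β_k = 0 if k ∉ N_B and β_k = q_k − 1 if k ∈ N_B, and γ_k = q_k − 1 if k ∉ N_B and γ_k = 0 if k ∈ N_B. Then (whenever all displayed digits lie in the admissible ranges 0 ≤ d ≤ q_k − 1) the following pairs of digit sequences have equal sign-variable Cantor series values: (i) if n ∈ N_B and n+1 ∈ N_B: (i_1,…,i_{n−1}, q_n−1−i_n, q_{n+1}−1, β_{n+2}, β_{n+3},…) and (i_1,…,i_{n−1}, q_n−i_n, 0, γ_{n+2}, γ_{n+3},…); (ii) if n ∈ N_B and n+1 ∉ N_B: (i_1,…,i_{n−1}, q_n−1−i_n, 0, β_{n+2},…) and (i_1,…,i_{n−1}, q_n−i_n, q_{n+1}−1, γ_{n+2},…); (iii) if n ∉ N_B and n+1 ∈ N_B: (i_1,…,i_{n−1}, i_n, q_{n+1}−1, β_{n+2},…) and (i_1,…,i_{n−1}, i_n−1, 0, γ_{n+2},…); (iv) if n ∉ N_B and n+1 ∉ N_B: (i_1,…,i_{n−1}, i_n, 0, β_{n+2},…) and (i_1,…,i_{n−1}, i_n−1, q_{n+1}−1,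 γ_{n+2},…). -/

import Mathlib

/-- `q_1 q_2 ⋯ q_n` (1-based indexing; `prodQ q 0 = 1`). -/
noncomputable def prodQ (q : ℕ → ℕ) (n : ℕ) : ℝ :=
  ∏ j ∈ Finset.Icc 1 n, (q j : ℝ)

/-- The positive Cantor series value `x = Σ_{n=1}^∞ i_n/(q_1 ⋯ q_n)`. -/
noncomputable def cantorVal (q i : ℕ → ℕ) : ℝ :=
  ∑' n : ℕ, (i (n + 1) : ℝ) / prodQ q (n + 1)

/-- The generalized shift operator
`σ_m = Σ_{k=1}^{m-1} i_k/(q_1⋯q_k) + Σ_{l=m+1}^∞ i_l/(q_1⋯q_{m-1} q_{m+1}⋯q_l)`. -/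
noncomputable def sigmaC (q i : ℕ → ℕ) (m : ℕ) : ℝ :=
  (∑ k ∈ Finset.Icc 1 (m - 1), (i k : ℝ) / prodQ q k) +
    ∑' t : ℕ, (i (m + 1 + t) : ℝ) /
      (prodQ q (m - 1) * ∏ j ∈ Finset.Icc (m + 1) (m + 1 + t), (q j : ℝ))

/-- The `m`-fold shift `σ^m(x) = Σ_{k=m+1}^∞ i_k/(q_{m+1} ⋯ q_k)`. -/
noncomputable def shiftVal (q i : ℕ → ℕ) (m : ℕ) : ℝ :=
  ∑' t : ℕ, (i (m + 1 + t) : ℝ) / ∏ j ∈ Finset.Icc (m + 1) (m + 1 + t), (q j : ℝ)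

-- `(-1)^{ρ_n}` where `ρ_n = 1` if `n ∈ N_B` and `ρ_n = 2` otherwise.
open Classical in
noncomputable def sgn (NB : Set ℕ) (n : ℕ) : ℝ := if n ∈ NB then -1 else 1

/-- The sign-variable Cantor series value `x = Σ_{n=1}^∞ (-1)^{ρ_n} i_n/(q_1 ⋯ q_n)`. -/
noncomputable def svCantorVal (NB : Set ℕ) (q i : ℕ → ℕ) : ℝ :=
  ∑' n : ℕ, sgn NB (n + 1) * (i (n + 1) : ℝ) / prodQ q (n + 1)

/-- The generalized shift operator for sign-variable Cantor series:
`σ_m = Σ_{k=1}^{m-1} (-1)^{ρ_k} i_k/(q_1⋯q_k)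
      + Σ_{l=m+1}^∞ (-1)^{ρ_l} i_l/(q_1⋯q_{m-1} q_{m+1}⋯q_l)`. -/
noncomputable def svSigma (NB : Set ℕ) (q i : ℕ → ℕ) (m : ℕ) : ℝ :=
  (∑ k ∈ Finset.Icc 1 (m - 1), sgn NB k * (i k : ℝ) / prodQ q k) +
    ∑' t : ℕ, sgn NB (m + 1 + t) * (i (m + 1 + t) : ℝ) /
      (prodQ q (m - 1) * ∏ j ∈ Finset.Icc (m + 1) (m + 1 + t), (q j : ℝ))

-- `β_k = q_k - 1` if `k ∈ N_B`, else `0`.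
open Classical in
noncomputable def betaD (NB : Set ℕ) (q : ℕ → ℕ) (k : ℕ) : ℕ :=
  if k ∈ NB then q k - 1 else 0

-- `γ_k = 0` if `k ∈ N_B`, else `q_k - 1`.
open Classical in
noncomputable def gammaD (NB : Set ℕ) (q : ℕ → ℕ) (k : ℕ) : ℕ :=
  if k ∈ NB then 0 else q k - 1

/-!
At position `n + 1` the digits prescribed in the four cases are `β_{n+1}` and `γ_{n+1}`, so the two
sequences are `(i_1, …, i_{n-1}, d, β_{n+1}, …)` and `(i_1, …, i_{n-1}, d', γ_{n+1}, …)`. The signed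
digit difference is `1` at `n` and `-(q_k - 1)` at every `k > n`, whatever `N_B` is, and the tail
telescopes: `Σ_{k>n} (q_k - 1)/(q_1 ⋯ q_k) = 1/(q_1 ⋯ q_n)`.
-/

open Filter Topology

section CantorProducts

variable {q : ℕ → ℕ}

lemma prodQ_succ (q : ℕ → ℕ) (n : ℕ) : prodQ q (n + 1) = prodQ q n * q (n + 1) :=
  Finset.prod_Icc_succ_top (Nat.le_add_left 1 n) _

lemma prodQ_pos (hq : ∀ k, 1 ≤ k → 0 < q k) (n : ℕ) : 0 < prodQ q n :=
  Finset.prod_pos fun k hk => Nat.cast_pos.2 (hq k (Finset.mem_Icc.1 hk).1)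

lemma two_pow_le_prodQ (hq : ∀ k, 1 ≤ k → 2 ≤ q k) (n : ℕ) : (2 : ℝ) ^ n ≤ prodQ q n := by
  calc (2 : ℝ) ^ n = ∏ _k ∈ Finset.Icc 1 n, (2 : ℝ) := by simp
    _ ≤ prodQ q n := Finset.prod_le_prod (fun _ _ => zero_le_two) fun k hk => by
        exact_mod_cast hq k (Finset.mem_Icc.1 hk).1

lemma tendsto_prodQ_atTop (hq : ∀ k, 1 ≤ k → 2 ≤ q k) : Tendsto (prodQ q) atTop atTop :=
  tendsto_atTop_mono (two_pow_le_prodQ hq) (tendsto_pow_atTop_atTop_of_one_lt one_lt_two)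

lemma sub_one_div_prodQ_succ (hq : ∀ k, 1 ≤ k → 0 < q k) (n : ℕ) :
    ((q (n + 1) : ℝ) - 1) / prodQ q (n + 1) = (prodQ q n)⁻¹ - (prodQ q (n + 1))⁻¹ := by
  have hP : prodQ q n ≠ 0 := (prodQ_pos hq n).ne'
  have hQ : (q (n + 1) : ℝ) ≠ 0 := Nat.cast_ne_zero.2 (hq (n + 1) n.succ_pos).ne'
  rw [prodQ_succ]
  field_simp

lemma hasSum_sub_one_div_prodQ (hq : ∀ k, 1 ≤ k → 2 ≤ q k) (n : ℕ) :
    HasSum (fun m => ((q (m + n + 1) : ℝ) - 1) / prodQ q (m + n + 1)) (prodQ q n)⁻¹ := by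
  have hpos (k : ℕ) (hk : 1 ≤ k) : 0 < q k := two_pos.trans_le (hq k hk)
  have hnonneg (m : ℕ) : 0 ≤ ((q (m + n + 1) : ℝ) - 1) / prodQ q (m + n + 1) :=
    div_nonneg (sub_nonneg.2 (Nat.one_le_cast.2 (hpos _ (Nat.succ_pos _)))) (prodQ_pos hpos _).le
  have hpartial (N : ℕ) : ∑ m ∈ Finset.range N, ((q (m + n + 1) : ℝ) - 1) / prodQ q (m + n + 1) =
      (prodQ q n)⁻¹ - (prodQ q (N + n))⁻¹ := by
    simpa only [sub_one_div_prodQ_succ hpos, Nat.add_right_comm _ 1 n, zero_add] using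
      Finset.sum_range_sub' (fun m => (prodQ q (m + n))⁻¹) N
  have hlim : Tendsto (fun N => (prodQ q (N + n))⁻¹) atTop (𝓝 0) :=
    ((tendsto_add_atTop_iff_nat n).2 (tendsto_prodQ_atTop hq)).inv_tendsto_atTop
  rw [hasSum_iff_tendsto_nat_of_nonneg hnonneg]
  simpa only [hpartial, sub_zero] using hlim.const_sub (prodQ q n)⁻¹

lemma hasSum_div_prodQ_zero_of_carry (hq : ∀ k, 1 ≤ k → 2 ≤ q k) {c : ℕ → ℝ} {n : ℕ} (hn : 1 ≤ n)
    (hlt : ∀ k < n, c k = 0) (heq : c n = 1) (hgt : ∀ k, n < k → c k = 1 - q k) :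
    HasSum (fun m => c (m + 1) / prodQ q (m + 1)) 0 := by
  have hhead : ∑ m ∈ Finset.range n, c (m + 1) / prodQ q (m + 1) = (prodQ q n)⁻¹ := by
    obtain ⟨p, rfl⟩ := Nat.exists_eq_add_of_le' hn
    rw [Finset.sum_range_succ, heq, one_div, Finset.sum_eq_zero, zero_add]
    intro m hm
    rw [hlt (m + 1) (Nat.succ_lt_succ (Finset.mem_range.1 hm)), zero_div]
  have htail : HasSum (fun m => c (m + n + 1) / prodQ q (m + n + 1)) (-(prodQ q n)⁻¹) := by
    have hterm (m : ℕ) : c (m + n + 1) / prodQ q (m + n + 1) =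
        -(((q (m + n + 1) : ℝ) - 1) / prodQ q (m + n + 1)) := by
      rw [hgt (m + n + 1) (by lia), ← neg_div, neg_sub]
    simpa only [hterm] using (hasSum_sub_one_div_prodQ hq n).neg
  rwa [← hasSum_nat_add_iff' n, hhead, zero_sub]

end CantorProducts

section SignVariable

variable {NB : Set ℕ} {q : ℕ → ℕ} {k : ℕ}

lemma sgn_of_mem (hk : k ∈ NB) : sgn NB k = -1 := if_pos hk

lemma sgn_of_notMem (hk : k ∉ NB) : sgn NB k = 1 := if_neg hk

lemma abs_sgn (NB : Set ℕ) (k : ℕ) : |sgn NB k| = 1 := by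
  by_cases hk : k ∈ NB
  · rw [sgn_of_mem hk, abs_neg, abs_one]
  · rw [sgn_of_notMem hk, abs_one]

lemma sgn_mul_sub_of_mem (hk : k ∈ NB) {d d' : ℕ} (h : d' = d + 1) :
    sgn NB k * ((d : ℝ) - d') = 1 := by
  rw [sgn_of_mem hk, h]
  push_cast
  ring

lemma sgn_mul_sub_of_notMem (hk : k ∉ NB) {d d' : ℕ} (h : d = d' + 1) :
    sgn NB k * ((d : ℝ) - d') = 1 := by
  rw [sgn_of_notMem hk, h]
  push_cast
  ring

lemma betaD_of_mem (hk : k ∈ NB) : betaD NB q k = q k - 1 := if_pos hk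

lemma betaD_of_notMem (hk : k ∉ NB) : betaD NB q k = 0 := if_neg hk

lemma gammaD_of_mem (hk : k ∈ NB) : gammaD NB q k = 0 := if_pos hk

lemma gammaD_of_notMem (hk : k ∉ NB) : gammaD NB q k = q k - 1 := if_neg hk

lemma betaD_le (NB : Set ℕ) (q : ℕ → ℕ) (k : ℕ) : betaD NB q k ≤ q k - 1 := by
  unfold betaD
  split_ifs <;> lia

lemma gammaD_le (NB : Set ℕ) (q : ℕ → ℕ) (k : ℕ) : gammaD NB q k ≤ q k - 1 := by
  unfold gammaD
  split_ifs <;> lia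

lemma sgn_mul_betaD_sub_gammaD (NB : Set ℕ) (hk : 1 ≤ q k) :
    sgn NB k * ((betaD NB q k : ℝ) - gammaD NB q k) = 1 - q k := by
  by_cases hB : k ∈ NB
  · rw [sgn_of_mem hB, betaD_of_mem hB, gammaD_of_mem hB, Nat.cast_pred hk]
    push_cast
    ring
  · rw [sgn_of_notMem hB, betaD_of_notMem hB, gammaD_of_notMem hB, Nat.cast_pred hk]
    push_cast
    ring

lemma summable_sgn_mul_div_prodQ (NB : Set ℕ) (hq : ∀ k, 1 ≤ k → 2 ≤ q k) {a : ℕ → ℕ}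
    (ha : ∀ᶠ k in atTop, a k ≤ q k - 1) :
    Summable fun m => sgn NB (m + 1) * (a (m + 1) : ℝ) / prodQ q (m + 1) := by
  have hpos (k : ℕ) (hk : 1 ≤ k) : 0 < q k := two_pos.trans_le (hq k hk)
  refine (hasSum_sub_one_div_prodQ hq 0).summable.of_norm_bounded_eventually_nat ?_
  filter_upwards [(tendsto_add_atTop_nat 1).eventually ha] with m hm
  have hP := prodQ_pos hpos (m + 1)
  rw [Real.norm_eq_abs, abs_div, abs_mul, abs_sgn, one_mul, Nat.abs_cast, abs_of_pos hP,
    add_zero, ← Nat.cast_pred (hpos (m + 1) m.succ_pos)]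
  gcongr

lemma svCantorVal_eq_of_carry (hq : ∀ k, 1 ≤ k → 2 ≤ q k) {a b : ℕ → ℕ} {n : ℕ} (hn : 1 ≤ n)
    (ha : ∀ᶠ k in atTop, a k ≤ q k - 1) (hb : ∀ᶠ k in atTop, b k ≤ q k - 1)
    (hlt : ∀ k < n, a k = b k) (heq : sgn NB n * ((a n : ℝ) - b n) = 1)
    (hgt : ∀ k, n < k → sgn NB k * ((a k : ℝ) - b k) = 1 - q k) :
    svCantorVal NB q a = svCantorVal NB q b := by
  have hdiff : HasSum (fun m => sgn NB (m + 1) * ((a (m + 1) : ℝ) - b (m + 1)) / prodQ q (m + 1))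
      0 := hasSum_div_prodQ_zero_of_carry hq (c := fun k => sgn NB k * ((a k : ℝ) - b k)) hn
    (fun k hk => by rw [hlt k hk, sub_self, mul_zero]) heq hgt
  have hsub := (summable_sgn_mul_div_prodQ NB hq ha).hasSum.sub
    (summable_sgn_mul_div_prodQ NB hq hb).hasSum
  simp only [← sub_div, ← mul_sub] at hsub
  exact sub_eq_zero.1 (hsub.unique hdiff)

end SignVariable

section SpliceDigits

/-- The digit sequence `(i_1, …, i_{n-1}, d, t_{n+1}, t_{n+2}, …)`, the common form of the
representations of a quasi-Q-rational number; the junk digit at index `0` is `i 0` if `0 < n`. -/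
def spliceDigits (i : ℕ → ℕ) (n d : ℕ) (t : ℕ → ℕ) (k : ℕ) : ℕ :=
  if k < n then i k else if k = n then d else t k

variable {i t : ℕ → ℕ} {n d k : ℕ}

lemma spliceDigits_of_lt (hk : k < n) : spliceDigits i n d t k = i k := if_pos hk

lemma spliceDigits_self (i : ℕ → ℕ) (n d : ℕ) (t : ℕ → ℕ) : spliceDigits i n d t n = d := by
  simp [spliceDigits]

lemma spliceDigits_of_gt (hk : n < k) : spliceDigits i n d t k = t k := by
  rw [spliceDigits, if_neg hk.not_gt, if_neg hk.ne']

lemma eventually_spliceDigits_le {u : ℕ → ℕ} (ht : ∀ k, t k ≤ u k) :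
    ∀ᶠ k in atTop, spliceDigits i n d t k ≤ u k := by
  filter_upwards [eventually_gt_atTop n] with k hk
  exact (spliceDigits_of_gt hk).trans_le (ht k)

lemma ite_eq_spliceDigits {e : ℕ} (he : t (n + 1) = e) :
    (fun k => if k < n then i k else if k = n then d else if k = n + 1 then e else t k) =
      spliceDigits i n d t := by
  subst he
  grind [spliceDigits]

lemma svCantorVal_spliceDigits_betaD_eq_gammaD {NB : Set ℕ} {q : ℕ → ℕ}
    (hq : ∀ k, 1 ≤ k → 2 ≤ q k) (i : ℕ → ℕ) (hn : 1 ≤ n) {d' : ℕ}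
    (hd : sgn NB n * ((d : ℝ) - d') = 1) :
    svCantorVal NB q (spliceDigits i n d (betaD NB q)) =
      svCantorVal NB q (spliceDigits i n d' (gammaD NB q)) := by
  refine svCantorVal_eq_of_carry hq hn (eventually_spliceDigits_le (betaD_le NB q))
    (eventually_spliceDigits_le (gammaD_le NB q)) (fun k hk => ?_) ?_ fun k hk => ?_
  · rw [spliceDigits_of_lt hk, spliceDigits_of_lt hk]
  · rwa [spliceDigits_self, spliceDigits_self]
  · rw [spliceDigits_of_gt hk, spliceDigits_of_gt hk]
    exact sgn_mul_betaD_sub_gammaD NB (one_le_two.trans (hq k (hn.trans hk.le)))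

end SpliceDigits

theorem stmt_14 (NB : Set ℕ) (q i : ℕ → ℕ) (hq : ∀ n, 1 ≤ n → 2 ≤ q n)
    (hi : ∀ n, 1 ≤ n → i n ≤ q n - 1) (n : ℕ) (hn : 1 ≤ n) (hin : 1 ≤ i n) :
    -- (i) `n ∈ N_B`, `n+1 ∈ N_B`
    (n ∈ NB → n + 1 ∈ NB →
      svCantorVal NB q (fun k => if k < n then i k else if k = n then q n - 1 - i n
        else if k = n + 1 then q (n + 1) - 1 else betaD NB q k) =
      svCantorVal NB q (fun k => if k < n then i k else if k = n then q n - i n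
        else if k = n + 1 then 0 else gammaD NB q k)) ∧
    -- (ii) `n ∈ N_B`, `n+1 ∉ N_B`
    (n ∈ NB → n + 1 ∉ NB →
      svCantorVal NB q (fun k => if k < n then i k else if k = n then q n - 1 - i n
        else if k = n + 1 then 0 else betaD NB q k) =
      svCantorVal NB q (fun k => if k < n then i k else if k = n then q n - i n
        else if k = n + 1 then q (n + 1) - 1 else gammaD NB q k)) ∧
    -- (iii) `n ∉ N_B`, `n+1 ∈ N_B`
    (n ∉ NB → n + 1 ∈ NB →
      svCantorVal NB q (fun k => if k < n then i k else if k = n then i n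
        else if k = n + 1 then q (n + 1) - 1 else betaD NB q k) =
      svCantorVal NB q (fun k => if k < n then i k else if k = n then i n - 1
        else if k = n + 1 then 0 else gammaD NB q k)) ∧
    -- (iv) `n ∉ N_B`, `n+1 ∉ N_B`
    (n ∉ NB → n + 1 ∉ NB →
      svCantorVal NB q (fun k => if k < n then i k else if k = n then i n
        else if k = n + 1 then 0 else betaD NB q k) =
      svCantorVal NB q (fun k => if k < n then i k else if k = n then i n - 1
        else if k = n + 1 then q (n + 1) - 1 else gammaD NB q k)) := by
  have hqn : 2 ≤ q n := hq n hn
  have hin_le : i n ≤ q n - 1 := hi n hn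
  have carry_of_mem (hB : n ∈ NB) : sgn NB n * (((q n - 1 - i n : ℕ) : ℝ) - (q n - i n : ℕ)) = 1 :=
    sgn_mul_sub_of_mem hB (by lia)
  have carry_of_notMem (hB : n ∉ NB) : sgn NB n * ((i n : ℝ) - (i n - 1 : ℕ)) = 1 :=
    sgn_mul_sub_of_notMem hB (by lia)
  refine ⟨fun hB hB' => ?_, fun hB hB' => ?_, fun hB hB' => ?_, fun hB hB' => ?_⟩
  · rw [ite_eq_spliceDigits (betaD_of_mem hB'), ite_eq_spliceDigits (gammaD_of_mem hB')]
    exact svCantorVal_spliceDigits_betaD_eq_gammaD hq i hn (carry_of_mem hB)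
  · rw [ite_eq_spliceDigits (betaD_of_notMem hB'), ite_eq_spliceDigits (gammaD_of_notMem hB')]
    exact svCantorVal_spliceDigits_betaD_eq_gammaD hq i hn (carry_of_mem hB)
  · rw [ite_eq_spliceDigits (betaD_of_mem hB'), ite_eq_spliceDigits (gammaD_of_mem hB')]
    exact svCantorVal_spliceDigits_betaD_eq_gammaD hq i hn (carry_of_notMem hB)
  · rw [ite_eq_spliceDigits (betaD_of_notMem hB'), ite_eq_spliceDigits (gammaD_of_notMem hB')]
    exact svCantorVal_spliceDigits_betaD_eq_gammaD hq i hn (carry_of_notMem hB)
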